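/- For the tensor A^{ℓk}_{(ij)(i'j')} = L₁δ^ℓ_kδ^i_{i'}δ^j_{j'} + ¼(L₂+L₃)(δ^j_{i'}δ^k_iδ^ℓ_{j'} + δ^i_{i'}δ^ℓ_{j'}δ^k_j + δ^i_kδ^{i'}_ℓδ^{j'}_j + δ^j_kδ^{i'}_ℓδ^{j'}_i − (4/3)δ^{i'}_{j'}δ^i_ℓδ^j_k − (4/3)δ^i_jδ^{i'}_ℓδ^{j'}_k + (4/9)δ^i_jδ^{i'}_{j'}δ^k_ℓ), whenever L₁ > 0, L₁+L₂+L₃ > 0 and L₂+L₃ ≤ 0, the strong Legendre condition A^{ℓk}_{(ij)(i'j')} ξ^{(ij)}_ℓ ξ^{(i'j')}_k ≥ (L₁+L₂+L₃) Σ|ξ^{(ij)}_ℓ|² holds for all ξ ∈ ℝ^{3×3×3}. -/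

import Mathlib

open Matrix BigOperators Finset

noncomputable def eps (i j k : Fin 3) : ℝ :=
  (((i : ℕ) : ℝ) - ((j : ℕ) : ℝ)) * (((j : ℕ) : ℝ) - ((k : ℕ) : ℝ)) *
    (((k : ℕ) : ℝ) - ((i : ℕ) : ℝ)) / 2

noncomputable def kron (i j : Fin 3) : ℝ := if i = j then 1 else 0

noncomputable def Acoef (L1 L23 : ℝ) (l k i j i' j' : Fin 3) : ℝ :=
  L1 * kron l k * kron i i' * kron j j'
  + (1/4) * L23 *
      (kron j i' * kron k i * kron l j' + kron i i' * kron l j' * kron k j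
       + kron i k * kron i' l * kron j' j + kron j k * kron i' l * kron j' i
       - (4/3) * kron i' j' * kron i l * kron j k
       - (4/3) * kron i j * kron i' l * kron j' k
       + (4/9) * kron i j * kron i' j' * kron k l)

set_option maxHeartbeats 4000000

theorem contract_inner (L1 L : ℝ) (x : Fin 3 → Fin 3 → Fin 3 → ℝ) (l k i j : Fin 3) :
    ∑ i', ∑ j', Acoef L1 L l k i j i' j' * x i j l * x i' j' k =
      x i j l * (L1 * kron l k * x i j k + (1/4) * L *
        (kron k i * x j l k + kron k j * x i l k + kron i k * x l j k + kron j k * x l i k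
         - (4/3) * kron i l * kron j k * (∑ a, x a a k)
         - (4/3) * kron i j * x l k k
         + (4/9) * kron i j * kron k l * (∑ a, x a a k))) := by
  fin_cases l <;> fin_cases k <;> fin_cases i <;> fin_cases j <;>
    (simp [Acoef, kron, Fin.sum_univ_three] <;> try ring)

theorem outer_sum (L1 L : ℝ) (x : Fin 3 → Fin 3 → Fin 3 → ℝ) :
    (∑ l, ∑ k, ∑ i, ∑ j, ∑ i', ∑ j', Acoef L1 L l k i j i' j' * x i j l * x i' j' k)
      = (L1 + L) * (∑ i, ∑ j, ∑ l, (x i j l) ^ 2)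
        - L * ((∑ i, ∑ j, ∑ l, ((x i j l - x j i l) / 2) ^ 2)
          + (1/3) * (∑ l, (∑ a, x a a l) ^ 2)
          + (1/2) * (∑ i, ∑ j, ∑ l,
              ((x i j l + x j i l) / 2 - (1/3) * kron i j * (∑ a, x a a l)
               - (x i l j + x l i j) / 2 + (1/3) * kron i l * (∑ a, x a a j)) ^ 2)) := by
  simp only [contract_inner]
  simp [kron, Fin.sum_univ_three]
  ring

theorem stmt7 (L1 L2 L3 : ℝ) (hL1 : 0 < L1) (hL0 : 0 < L1 + L2 + L3)
    (hL23 : L2 + L3 ≤ 0) (x : Fin 3 → Fin 3 → Fin 3 → ℝ) :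
    (L1 + L2 + L3) * (∑ i, ∑ j, ∑ l, (x i j l) ^ 2)
      ≤ ∑ l, ∑ k, ∑ i, ∑ j, ∑ i', ∑ j',
          Acoef L1 (L2 + L3) l k i j i' j' * x i j l * x i' j' k := by
  rw [outer_sum]
  have h1 : 0 ≤ (∑ i, ∑ j, ∑ l, ((x i j l - x j i l) / 2) ^ 2)
          + (1/3) * (∑ l, (∑ a, x a a l) ^ 2)
          + (1/2) * (∑ i, ∑ j, ∑ l,
              ((x i j l + x j i l) / 2 - (1/3) * kron i j * (∑ a, x a a l)
               - (x i l j + x l i j) / 2 + (1/3) * kron i l * (∑ a, x a a j)) ^ 2) := by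
    positivity
  have h2 := mul_nonneg (neg_nonneg.mpr hL23) h1
  linarith
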